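/- Assume that for every (β, s) ∈ Δ(Ω) × S the receiver's best response â(β, s) is unique, and set v̂(β, s) = ∑_ω β(ω) v(s, â(β, s), ω). Fix a prior μ0 ∈ Δ(Ω) and define V^co(μ0) = sup{z : (μ0, z) ∈ convexHull(⋃_{s∈S} v̂_s)} and V^pp(μ0) = sup{z : (μ0, z) ∈ convexHull(⋃_{s∈S} v̂_s^P)}, and assume both suprema are attained by finitely supported joint distributions on Δ(Ω) × S. Then V^pp(μ0) = V^co(μ0) if and only if there exists a finitely supported joint distribution τ on Δ(Ω) × S such that ∑_{(μ,s)} τ(μ, s) μ = μ0, ∑_{(μ,s)} τ(μ, s) v̂(μ, s) = V^co(μ0), and every (μ, s) with τ(μ, s) > 0 lies in the pooling set P (i.e., a pooling equilibrium exists at (μ, s)). -/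

import Mathlib

open scoped BigOperators

noncomputable section

/-- A pooling equilibrium exists at `(μb, sb)`. -/
def PoolingAt {Ω S A : Type*} [Fintype Ω] [Fintype S] [Fintype A]
    (v u : S → A → Ω → ℝ) (μb : Ω → ℝ) (sb : S) : Prop :=
  ∃ (β : S → Ω → ℝ) (α : S → A),
    (∀ t, β t ∈ stdSimplex ℝ Ω) ∧ β sb = μb ∧
    (∀ t a, (∑ ω, β t ω * u t a ω) ≤ (∑ ω, β t ω * u t (α t) ω)) ∧
    (∀ ω, 0 < μb ω → ∀ s', v s' (α s') ω ≤ v sb (α sb) ω)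

/-!
A finitely supported joint distribution averages points of the payoff graph, so the pair it yields
(mean belief, expected payoff) lies in the convex hull of that graph. Restricting the graph shrinks
the hull, and payoffs are bounded on the simplex; hence, once the unrestricted optimum is attained
inside the restricted hull, it is also the greatest value there, and the two envelopes agree.
-/

/-- The value at `m` of the concave envelope of the set of points `G`, viewed as (belief, payoff)
pairs. As a real supremum it takes the junk value `0` when no point of the hull lies over `m`, or
when such points have unbounded payoffs. -/
def concaveEnvelope {E : Type*} [AddCommGroup E] [Module ℝ E] (G : Set (E × ℝ)) (m : E) : ℝ :=
  sSup {z : ℝ | (m, z) ∈ convexHull ℝ G}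

/-- The union over actions `s` of the interim payoff graphs `v̂_s`, with beliefs in `B`. -/
def payoffGraph {E S : Type*} (B : Set E) (f : E → S → ℝ) : Set (E × ℝ) :=
  ⋃ s : S, {q : E × ℝ | ∃ μ ∈ B, q = (μ, f μ s)}

/-- The part of `payoffGraph B f` over belief-action pairs satisfying a constraint `P`. For
`P = PoolingAt v u` it is the union of the pooling payoff graphs `v̂_s^P`. -/
def constrainedPayoffGraph {E S : Type*} (B : Set E) (P : E → S → Prop) (f : E → S → ℝ) :
    Set (E × ℝ) :=
  ⋃ s : S, {q : E × ℝ | ∃ μ ∈ B, P μ s ∧ q = (μ, f μ s)}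

/-- `τ` is a finitely supported joint distribution of beliefs in `B` and actions, concentrated on
the pairs satisfying `P`, with mean belief `m` (taken state by state) and expected payoff `z`. -/
def AttainsOn {Ω S : Type*} (B : Set (Ω → ℝ)) (P : (Ω → ℝ) → S → Prop) (f : (Ω → ℝ) → S → ℝ)
    (m : Ω → ℝ) (z : ℝ) (τ : (Ω → ℝ) × S → ℝ) : Prop :=
  (∀ x, 0 ≤ τ x) ∧ (Function.support τ).Finite ∧ (∑ᶠ x, τ x) = 1 ∧
    (∀ x, τ x ≠ 0 → x.1 ∈ B ∧ P x.1 x.2) ∧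
    (∀ ω, ∑ᶠ x : (Ω → ℝ) × S, τ x * x.1 ω = m ω) ∧
    (∑ᶠ x : (Ω → ℝ) × S, τ x * f x.1 x.2) = z

section ConvexHull

variable {E : Type*} [AddCommGroup E] [Module ℝ E] {G H : Set (E × ℝ)}

theorem bddAbove_convexHull_fibre (hG : BddAbove (Prod.snd '' G)) (m : E) :
    BddAbove {z : ℝ | (m, z) ∈ convexHull ℝ G} := by
  obtain ⟨M, hM⟩ := hG
  have h_halfSpace : Convex ℝ {q : E × ℝ | q.2 ≤ M} :=
    convex_halfSpace_le (LinearMap.snd ℝ E ℝ).isLinear M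
  exact ⟨M, fun _ hz =>
    convexHull_min (fun _ hq => hM (Set.mem_image_of_mem Prod.snd hq)) h_halfSpace hz⟩

theorem concaveEnvelope_eq_of_subset_of_mem (hGH : G ⊆ H) (hH : BddAbove (Prod.snd '' H)) {m : E}
    (hm : (m, concaveEnvelope H m) ∈ convexHull ℝ G) :
    concaveEnvelope G m = concaveEnvelope H m :=
  IsGreatest.csSup_eq
    ⟨hm, fun _ hz => le_csSup (bddAbove_convexHull_fibre hH m) (convexHull_mono hGH hz)⟩

end ConvexHull

theorem finsum_smul_prodMk {ι R E F : Type*} [Zero R] [AddCommMonoid E] [SMulWithZero R E]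
    [AddCommMonoid F] [SMulWithZero R F] {w : ι → R} (hw : (Function.support w).Finite)
    (b : ι → E) (c : ι → F) :
    ∑ᶠ i, w i • (b i, c i) = (∑ᶠ i, w i • b i, ∑ᶠ i, w i • c i) := by
  have h_support : (Function.support fun i => w i • (b i, c i)).Finite :=
    hw.subset (Function.support_smul_subset_left w _)
  exact Prod.ext ((AddMonoidHom.fst E F).map_finsum h_support)
    ((AddMonoidHom.snd E F).map_finsum h_support)

theorem constrainedPayoffGraph_subset {E S : Type*} (B : Set E) (P : E → S → Prop)
    (f : E → S → ℝ) : constrainedPayoffGraph B P f ⊆ payoffGraph B f :=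
  Set.iUnion_mono fun _ _ ⟨μ, hμ, _, hq⟩ => ⟨μ, hμ, hq⟩

theorem AttainsOn.mem_convexHull {Ω S : Type*} {B : Set (Ω → ℝ)} {P : (Ω → ℝ) → S → Prop}
    {f : (Ω → ℝ) → S → ℝ} {m : Ω → ℝ} {z : ℝ} {τ : (Ω → ℝ) × S → ℝ}
    (hτ : AttainsOn B P f m z τ) : (m, z) ∈ convexHull ℝ (constrainedPayoffGraph B P f) := by
  obtain ⟨h_nonneg, h_finite, h_one, h_supp, h_mean, h_value⟩ := hτ
  have h_belief : ∑ᶠ x, τ x • x.1 = m := funext fun ω =>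
    (finsum_apply (h_finite.subset (Function.support_smul_subset_left τ _)) ω).trans (h_mean ω)
  have h_average : ∑ᶠ x, τ x • (x.1, f x.1 x.2) = (m, z) :=
    (finsum_smul_prodMk h_finite _ _).trans (Prod.ext h_belief h_value)
  rw [← h_average]
  refine (convex_convexHull ℝ _).finsum_mem h_nonneg h_one fun x hx => subset_convexHull ℝ _ ?_
  exact Set.mem_iUnion.2 ⟨x.2, x.1, (h_supp x hx).1, (h_supp x hx).2, rfl⟩

theorem bddAbove_snd_image_payoffGraph_stdSimplex {Ω S A : Type*} [Fintype Ω] [Finite S] [Finite A]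
    (v : S → A → Ω → ℝ) (arg : (Ω → ℝ) → S → A) :
    BddAbove (Prod.snd '' payoffGraph (stdSimplex ℝ Ω)
      fun μ s => ∑ ω, μ ω * v s (arg μ s) ω) := by
  obtain ⟨M, hM⟩ := Set.finite_range (fun x : S × A × Ω => v x.1 x.2.1 x.2.2) |>.bddAbove
  refine ⟨M, Set.forall_mem_image.2 fun q hq => ?_⟩
  obtain ⟨s, μ, hμ, rfl⟩ := Set.mem_iUnion.1 hq
  exact (convex_Iic M).sum_mem (fun ω _ => hμ.1 ω) hμ.2
    fun ω _ => hM (Set.mem_range_self (s, arg μ s, ω))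

theorem extended_commitment_eq_pre_persuasion_iff_pooling_support_general {Ω S : Type*}
    {B : Set (Ω → ℝ)} {P : (Ω → ℝ) → S → Prop} {f : (Ω → ℝ) → S → ℝ} {m : Ω → ℝ}
    (hf : BddAbove (Prod.snd '' payoffGraph B f))
    (h_attained : ∃ τ, AttainsOn B P f m (concaveEnvelope (constrainedPayoffGraph B P f) m) τ) :
    concaveEnvelope (constrainedPayoffGraph B P f) m = concaveEnvelope (payoffGraph B f) m ↔
      ∃ τ, AttainsOn B P f m (concaveEnvelope (payoffGraph B f) m) τ := by
  constructor
  · intro h_eq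
    rwa [← h_eq]
  · rintro ⟨τ, hτ⟩
    exact concaveEnvelope_eq_of_subset_of_mem (constrainedPayoffGraph_subset B P f) hf
      hτ.mem_convexHull

/-- Assume unique receiver best responses `arg`, interim payoffs
`v̂(μ, s) = ∑ ω, μ ω * v(s, arg μ s, ω)`, and that the concave envelopes `V^co` and
`V^pp` of the interim and pooling payoff graphs at the prior `μ0` are both attained
by finitely supported joint distributions. Then `V^pp(μ0) = V^co(μ0)` iff some
finitely supported joint distribution with belief marginal `μ0` attains `V^co(μ0)`
and is supported on the pooling set. -/
theorem extended_commitment_eq_pre_persuasion_iff_pooling_support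
    {Ω S A : Type*} [Fintype Ω] [Nonempty Ω] [Fintype S] [Nonempty S]
    [Fintype A] [Nonempty A]
    (v u : S → A → Ω → ℝ)
    (arg : (Ω → ℝ) → S → A)
    (harg : ∀ β ∈ stdSimplex ℝ Ω, ∀ (s : S) (a : A), a ≠ arg β s →
      (∑ ω, β ω * u s a ω) < (∑ ω, β ω * u s (arg β s) ω))
    (vhat : (Ω → ℝ) → S → ℝ)
    (hvhat : ∀ (μ : Ω → ℝ) (s : S), vhat μ s = ∑ ω, μ ω * v s (arg μ s) ω)
    (μ0 : Ω → ℝ) (hμ0 : μ0 ∈ stdSimplex ℝ Ω)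
    (Vco Vpp : ℝ)
    (hVco : Vco = sSup {z : ℝ | ((μ0, z) : (Ω → ℝ) × ℝ) ∈
      convexHull ℝ (⋃ s : S, {q : (Ω → ℝ) × ℝ | ∃ μ ∈ stdSimplex ℝ Ω, q = (μ, vhat μ s)})})
    (hVpp : Vpp = sSup {z : ℝ | ((μ0, z) : (Ω → ℝ) × ℝ) ∈
      convexHull ℝ (⋃ s : S, {q : (Ω → ℝ) × ℝ |
        ∃ μ ∈ stdSimplex ℝ Ω, PoolingAt v u μ s ∧ q = (μ, vhat μ s)})})
    -- V^co(μ0) is attained by a finitely supported joint distribution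
    (hattco : ∃ τ : ((Ω → ℝ) × S) → ℝ,
      (∀ x, 0 ≤ τ x) ∧ (Function.support τ).Finite ∧ (∑ᶠ x, τ x) = 1 ∧
      (∀ x, τ x ≠ 0 → x.1 ∈ stdSimplex ℝ Ω) ∧
      (∀ ω, ∑ᶠ x : (Ω → ℝ) × S, τ x * x.1 ω = μ0 ω) ∧
      (∑ᶠ x : (Ω → ℝ) × S, τ x * vhat x.1 x.2) = Vco)
    -- V^pp(μ0) is attained by a finitely supported joint distribution
    (hattpp : ∃ τ : ((Ω → ℝ) × S) → ℝ,
      (∀ x, 0 ≤ τ x) ∧ (Function.support τ).Finite ∧ (∑ᶠ x, τ x) = 1 ∧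
      (∀ x, τ x ≠ 0 → x.1 ∈ stdSimplex ℝ Ω ∧ PoolingAt v u x.1 x.2) ∧
      (∀ ω, ∑ᶠ x : (Ω → ℝ) × S, τ x * x.1 ω = μ0 ω) ∧
      (∑ᶠ x : (Ω → ℝ) × S, τ x * vhat x.1 x.2) = Vpp) :
    Vpp = Vco ↔
      ∃ τ : ((Ω → ℝ) × S) → ℝ,
        (∀ x, 0 ≤ τ x) ∧ (Function.support τ).Finite ∧ (∑ᶠ x, τ x) = 1 ∧
        (∀ x, τ x ≠ 0 → x.1 ∈ stdSimplex ℝ Ω ∧ PoolingAt v u x.1 x.2) ∧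
        (∀ ω, ∑ᶠ x : (Ω → ℝ) × S, τ x * x.1 ω = μ0 ω) ∧
        (∑ᶠ x : (Ω → ℝ) × S, τ x * vhat x.1 x.2) = Vco := by
  obtain rfl := funext₂ hvhat
  subst hVco hVpp
  exact extended_commitment_eq_pre_persuasion_iff_pooling_support_general
    (bddAbove_snd_image_payoffGraph_stdSimplex v arg) hattpp
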